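/- For every real τ > 0, setting q = e^{-π/τ}, one has √3 · η(iτ)η(6iτ)²/(η(3iτ)η(2iτ)) = (1/√(2τ)) · q^{1/24} · ∑_{k∈ℤ} ( q^{6k²+k} + q^{6k²+5k+1} - 2 q^{6k²+3k+1/3} ). -/

import Mathlib

open scoped Real

noncomputable def eta (z : ℂ) : ℂ :=
  Complex.exp (Real.pi * Complex.I * z / 12) *
    ∏' n : ℕ, (1 - Complex.exp (2 * Real.pi * Complex.I * ((n : ℂ) + 1) * z))

/-!
Write `φ(x) = ∏ (1 - x ^ n)`. With `x = exp (2πiz)`, the eta quotient is an explicit power of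
`exp (πiz / 12)` times `φ(x) φ(x⁶)² / (φ(x³) φ(x²))`. Sorting the factors of these products by the
residue of their exponents modulo 6 leaves `φ(x⁶) ∏ (1 - x ^ (6n + 1)) (1 - x ^ (6n + 5))`, which by
the Jacobi triple product is the alternating theta series `∑ (-1) ^ k x ^ (3k² + 2k)`. The triple
product itself is the limit, by dominated convergence, of its finite form
`∏_{j < n} (1 + z q ^ (2j + 1)) (1 + z⁻¹ q ^ (2j + 1)) =
∑ z ^ k q ^ (k²) (q²; q²)_(2n) / ((q²; q²)_(n - k) (q²; q²)_(n + k))`, an induction on `n`.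

On the other side, the three exponents are quadratics with vertices at `-1/12`, `-5/12` and `-1/4`,
so the sum combines Gaussian sums over shifts of `ℤ`. Poisson summation turns it into a Gaussian sum
over `ℤ` with weight `cos (πn / 6) + cos (5πn / 6) - 2 cos (πn / 2)`, which vanishes unless
`n ≡ ±2 mod 6` and is `±3` there; the surviving terms are the same alternating theta series.
-/

open Filter Topology Finset

section QSeries

/-- The finite q-Pochhammer symbol `(q; q)_n = (1 - q) ⋯ (1 - q ^ n)`. -/
def qPochhammer {R : Type*} [CommRing R] (q : R) (n : ℕ) : R :=
  ∏ j ∈ range n, (1 - q ^ (j + 1))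

/-- The reciprocal `1 / (q; q)_m`, extended by `0` to negative `m`, so that sums over a finite
window of `k` can be written as sums over all of `ℤ`. -/
def invQPochhammer {K : Type*} [Field K] (q : K) : ℤ → K
  | .ofNat n => (qPochhammer q n)⁻¹
  | .negSucc _ => 0

/-- The general term `z ^ k q ^ (k²)` of the Jacobi theta series. -/
def thetaTerm {K : Type*} [Field K] (z q : K) (k : ℤ) : K :=
  z ^ k * q ^ (k ^ 2)

/-- The `k`-th term of the finite form of the Jacobi theta series: the theta term weighted by
`1 / ((q²; q²)_(n - k) (q²; q²)_(n + k))`, which vanishes for `|k| > n`. -/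
def finiteThetaTerm {K : Type*} [Field K] (z q : K) (n : ℕ) (k : ℤ) : K :=
  thetaTerm z q k * (invQPochhammer (q ^ 2) (n - k) * invQPochhammer (q ^ 2) (n + k))

/-- Euler's function `φ(q) = ∏ (1 - q ^ n)` over `n ≥ 1`, indexed from `0`. -/
noncomputable def eulerFunction {R : Type*} [CommRing R] [TopologicalSpace R] (q : R) : R :=
  ∏' n : ℕ, (1 - q ^ (n + 1))

section Finite

lemma qPochhammer_succ {R : Type*} [CommRing R] (q : R) (n : ℕ) :
    qPochhammer q (n + 1) = qPochhammer q n * (1 - q ^ (n + 1)) :=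
  prod_range_succ _ _

variable {K : Type*} [Field K] {q z : K}

lemma invQPochhammer_natCast (q : K) (n : ℕ) : invQPochhammer q n = (qPochhammer q n)⁻¹ := rfl

lemma invQPochhammer_of_neg (q : K) : ∀ {m : ℤ}, m < 0 → invQPochhammer q m = 0
  | .negSucc _, _ => rfl

lemma invQPochhammer_sub_one (hq : ∀ n, n ≠ 0 → q ^ n ≠ 1) (m : ℤ) :
    invQPochhammer q (m - 1) = invQPochhammer q m * (1 - q ^ m) := by
  rcases lt_trichotomy m 0 with hm | rfl | hm
  · rw [invQPochhammer_of_neg q hm, invQPochhammer_of_neg q (by omega), zero_mul]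
  · rw [invQPochhammer_of_neg q (by omega), zpow_zero, sub_self, mul_zero]
  · obtain ⟨n, rfl⟩ : ∃ n : ℕ, m = (n + 1 : ℕ) := ⟨(m - 1).toNat, by omega⟩
    have hn : 1 - q ^ (n + 1) ≠ 0 := sub_ne_zero.2 (hq (n + 1) n.succ_ne_zero).symm
    rw [show ((n + 1 : ℕ) : ℤ) - 1 = n by simp, invQPochhammer_natCast, invQPochhammer_natCast,
      qPochhammer_succ, zpow_natCast, mul_inv, inv_mul_cancel_right₀ hn]

lemma invQPochhammer_mul_recurrence (hq0 : q ≠ 0) (hq : ∀ n, n ≠ 0 → q ^ n ≠ 1) (a b : ℤ) :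
    invQPochhammer q a * invQPochhammer q b * ((1 - q ^ (a + b - 1)) * (1 - q ^ (a + b))) =
      (1 + q ^ (a + b - 1)) * (invQPochhammer q (a - 1) * invQPochhammer q (b - 1)) +
        q ^ a * (invQPochhammer q a * invQPochhammer q (b - 1 - 1)) +
        q ^ b * (invQPochhammer q (a - 1 - 1) * invQPochhammer q b) := by
  simp only [invQPochhammer_sub_one hq, zpow_sub_one₀ hq0, zpow_add₀ hq0]
  ring

lemma thetaTerm_sub_one (hz : z ≠ 0) (hq0 : q ≠ 0) (n : ℕ) (k : ℤ) :
    z * q ^ (2 * n + 1) * thetaTerm z q (k - 1) = (q ^ 2) ^ (n + 1 - k) * thetaTerm z q k := by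
  have hexp : q ^ (2 * n + 1) * q ^ ((k - 1) ^ 2) = (q ^ 2) ^ (n + 1 - k) * q ^ (k ^ 2) := by
    rw [← zpow_natCast, ← zpow_natCast, ← zpow_mul, ← zpow_add₀ hq0, ← zpow_add₀ hq0]
    congr 1
    push_cast
    ring
  calc z * q ^ (2 * n + 1) * thetaTerm z q (k - 1)
      = z ^ k * (q ^ (2 * n + 1) * q ^ ((k - 1) ^ 2)) := by
        rw [thetaTerm, zpow_sub_one₀ hz]
        field_simp
    _ = (q ^ 2) ^ (n + 1 - k) * thetaTerm z q k := by
        rw [hexp, thetaTerm]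
        ring

lemma thetaTerm_inv_neg (z q : K) (k : ℤ) : thetaTerm z⁻¹ q (-k) = thetaTerm z q k := by
  simp [thetaTerm]

lemma thetaTerm_add_one (hz : z ≠ 0) (hq0 : q ≠ 0) (n : ℕ) (k : ℤ) :
    z⁻¹ * q ^ (2 * n + 1) * thetaTerm z q (k + 1) = (q ^ 2) ^ (n + 1 + k) * thetaTerm z q k := by
  have h := thetaTerm_sub_one (inv_ne_zero hz) hq0 n (-k)
  rwa [← neg_add', thetaTerm_inv_neg, thetaTerm_inv_neg, sub_neg_eq_add] at h

lemma finiteThetaTerm_succ (hz : z ≠ 0) (hq0 : q ≠ 0) (hq : ∀ n, n ≠ 0 → q ^ n ≠ 1)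
    (n : ℕ) (k : ℤ) :
    finiteThetaTerm z q (n + 1) k *
        ((1 - (q ^ 2) ^ (2 * n + 1)) * (1 - (q ^ 2) ^ (2 * n + 2))) =
      (1 + (q ^ 2) ^ (2 * n + 1)) * finiteThetaTerm z q n k +
        z * q ^ (2 * n + 1) * finiteThetaTerm z q n (k - 1) +
        z⁻¹ * q ^ (2 * n + 1) * finiteThetaTerm z q n (k + 1) := by
  have hsq : ∀ n, n ≠ 0 → (q ^ 2) ^ n ≠ 1 := fun n hn => by
    rw [← pow_mul]; exact hq _ (mul_ne_zero two_ne_zero hn)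
  have hrec := invQPochhammer_mul_recurrence (pow_ne_zero 2 hq0) hsq (n + 1 - k) (n + 1 + k)
  have hexp : (n + 1 - k : ℤ) + (n + 1 + k) = (2 * n + 2 : ℕ) := by push_cast; ring
  have hexp' : ((2 * n + 2 : ℕ) : ℤ) - 1 = (2 * n + 1 : ℕ) := by push_cast; ring
  rw [hexp, hexp', zpow_natCast, zpow_natCast] at hrec
  simp only [finiteThetaTerm]
  push_cast
  rw [show (n - k : ℤ) = n + 1 - k - 1 by ring, show (n + k : ℤ) = n + 1 + k - 1 by ring,
    show n - (k - 1) = n + 1 - k by ring, show n + (k - 1) = n + 1 + k - 1 - 1 by ring,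
    show n - (k + 1) = n + 1 - k - 1 - 1 by ring, show n + (k + 1) = n + 1 + k by ring]
  linear_combination thetaTerm z q k * hrec -
    invQPochhammer (q ^ 2) (n + 1 - k) * invQPochhammer (q ^ 2) (n + 1 + k - 1 - 1) *
      thetaTerm_sub_one hz hq0 n k -
    invQPochhammer (q ^ 2) (n + 1 - k - 1 - 1) * invQPochhammer (q ^ 2) (n + 1 + k) *
      thetaTerm_add_one hz hq0 n k

lemma hasSum_finiteThetaTerm_zero [TopologicalSpace K] (z q : K) :
    HasSum (finiteThetaTerm z q 0) 1 := by
  have hzero : finiteThetaTerm z q 0 0 = 1 := by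
    simp [finiteThetaTerm, thetaTerm, invQPochhammer, qPochhammer]
  rw [← hzero]
  refine hasSum_single 0 fun k hk => ?_
  rcases lt_or_gt_of_ne hk with hk | hk
  · rw [finiteThetaTerm, invQPochhammer_of_neg (m := ((0 : ℕ) : ℤ) + k) _ (by simpa using hk),
      mul_zero, mul_zero]
  · rw [finiteThetaTerm, invQPochhammer_of_neg (m := ((0 : ℕ) : ℤ) - k) _ (by simpa using hk),
      zero_mul, mul_zero]

theorem hasSum_finiteThetaTerm [TopologicalSpace K] [IsTopologicalRing K]
    (hz : z ≠ 0) (hq0 : q ≠ 0) (hq : ∀ n, n ≠ 0 → q ^ n ≠ 1) (n : ℕ) :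
    HasSum (finiteThetaTerm z q n)
      ((∏ j ∈ range n, (1 + z * q ^ (2 * j + 1)) * (1 + z⁻¹ * q ^ (2 * j + 1))) /
        qPochhammer (q ^ 2) (2 * n)) := by
  have hsub : ∀ n, 1 - (q ^ 2) ^ (n + 1) ≠ 0 := fun n =>
    sub_ne_zero.2 (by rw [← pow_mul]; exact (hq _ (by omega)).symm)
  induction n with
  | zero => simpa [qPochhammer] using hasSum_finiteThetaTerm_zero z q
  | succ n ih =>
    have hleft := ((Equiv.subRight (1 : ℤ)).hasSum_iff.2 ih).mul_left (z * q ^ (2 * n + 1))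
    have hright := ((Equiv.addRight (1 : ℤ)).hasSum_iff.2 ih).mul_left (z⁻¹ * q ^ (2 * n + 1))
    have hexpand := ((((ih.mul_left (1 + (q ^ 2) ^ (2 * n + 1))).add hleft).add hright).div_const
      ((1 - (q ^ 2) ^ (2 * n + 1)) * (1 - (q ^ 2) ^ (2 * n + 2))))
    convert hexpand using 1
    · funext k
      exact eq_div_of_mul_eq (mul_ne_zero (hsub _) (hsub _)) (finiteThetaTerm_succ hz hq0 hq n k)
    · rw [prod_range_succ, show 2 * (n + 1) = 2 * n + 1 + 1 by ring, qPochhammer_succ,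
        qPochhammer_succ, add_assoc (2 * n)]
      field_simp [hsub (2 * n), hsub (2 * n + 1)]
      ring

end Finite

section Limit

variable {𝕜 : Type*} [NormedField 𝕜] {q z : 𝕜}

lemma norm_pow_lt_one_of_ne_zero (hq : ‖q‖ < 1) {n : ℕ} (hn : n ≠ 0) : ‖q ^ n‖ < 1 := by
  simpa only [norm_pow] using pow_lt_one₀ (norm_nonneg q) hq hn

lemma pow_ne_one_of_norm_lt_one (hq : ‖q‖ < 1) {n : ℕ} (hn : n ≠ 0) : q ^ n ≠ 1 := fun h =>
  (norm_pow_lt_one_of_ne_zero hq hn).ne (by rw [h, norm_one])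

lemma summable_norm_neg_pow_succ (hq : ‖q‖ < 1) : Summable fun n : ℕ => ‖-q ^ (n + 1)‖ := by
  simpa only [norm_neg, norm_pow] using
    (summable_nat_add_iff 1).2 (summable_geometric_of_lt_one (norm_nonneg q) hq)

lemma summable_norm_thetaTerm (hz : z ≠ 0) (hq0 : q ≠ 0) (hq : ‖q‖ < 1) :
    Summable fun k => ‖thetaTerm z q k‖ := by
  have hT : 0 < -Real.log ‖q‖ / π :=
    div_pos (neg_pos.2 (Real.log_neg (norm_pos_iff.2 hq0) hq)) Real.pi_pos
  refine (summable_pow_mul_jacobiTheta₂_term_bound (|Real.log ‖z‖| / (2 * π)) hT 0).of_nonneg_of_le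
    (fun _ => norm_nonneg _) fun k => ?_
  have hlog : k * Real.log ‖z‖ ≤ |Real.log ‖z‖| * |(k : ℝ)| := by
    rw [mul_comm, ← abs_mul]; exact le_abs_self _
  calc ‖thetaTerm z q k‖
      = Real.exp (k * Real.log ‖z‖ + k ^ 2 * Real.log ‖q‖) := by
        rw [thetaTerm, norm_mul, norm_zpow, norm_zpow, Real.exp_add, ← Int.cast_pow,
          ← Real.log_zpow, ← Real.log_zpow, Real.exp_log, Real.exp_log] <;> positivity
    _ ≤ Real.exp (|Real.log ‖z‖| * |(k : ℝ)| + k ^ 2 * Real.log ‖q‖) := by gcongr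
    _ = _ := by
        rw [pow_zero, one_mul]
        push_cast
        field_simp
        ring_nf

variable [CompleteSpace 𝕜]

lemma multipliable_eulerFunction (hq : ‖q‖ < 1) : Multipliable fun n : ℕ => 1 - q ^ (n + 1) := by
  simpa only [← sub_eq_add_neg] using
    multipliable_one_add_of_summable (f := fun n : ℕ => -q ^ (n + 1))
      (summable_norm_neg_pow_succ hq)

lemma eulerFunction_ne_zero (hq : ‖q‖ < 1) : eulerFunction q ≠ 0 := by
  have hfactor (n : ℕ) : 1 + -q ^ (n + 1) ≠ 0 := by
    rw [← sub_eq_add_neg]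
    exact sub_ne_zero.2 (pow_ne_one_of_norm_lt_one hq n.succ_ne_zero).symm
  simpa only [eulerFunction, sub_eq_add_neg] using
    tprod_one_add_ne_zero_of_summable hfactor (summable_norm_neg_pow_succ hq)

lemma tendsto_qPochhammer (hq : ‖q‖ < 1) :
    Tendsto (qPochhammer q) atTop (𝓝 (eulerFunction q)) :=
  (multipliable_eulerFunction hq).tendsto_prod_tprod_nat

lemma tendsto_invQPochhammer (hq : ‖q‖ < 1) :
    Tendsto (invQPochhammer q) atTop (𝓝 (eulerFunction q)⁻¹) := by
  rw [← Nat.map_cast_int_atTop]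
  exact tendsto_map'_iff.2 ((tendsto_qPochhammer hq).inv₀ (eulerFunction_ne_zero hq))

lemma exists_norm_invQPochhammer_le (hq : ‖q‖ < 1) : ∃ C, ∀ m, ‖invQPochhammer q m‖ ≤ C := by
  obtain ⟨C, hC⟩ := ((tendsto_qPochhammer hq).inv₀ (eulerFunction_ne_zero hq)).norm.bddAbove_range
  refine ⟨C, fun m => ?_⟩
  match m with
  | .ofNat n => exact hC ⟨n, rfl⟩
  | .negSucc n => simpa [invQPochhammer] using (norm_nonneg _).trans (hC ⟨0, rfl⟩)

lemma tendsto_tsum_finiteThetaTerm (hz : z ≠ 0) (hq0 : q ≠ 0) (hq : ‖q‖ < 1) :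
    Tendsto (fun n => ∑' k, finiteThetaTerm z q n k) atTop
      (𝓝 ((∑' k, thetaTerm z q k) * ((eulerFunction (q ^ 2))⁻¹ * (eulerFunction (q ^ 2))⁻¹))) := by
  have hsq : ‖q ^ 2‖ < 1 := norm_pow_lt_one_of_ne_zero hq two_ne_zero
  obtain ⟨C, hC⟩ := exists_norm_invQPochhammer_le hsq
  rw [← tsum_mul_right]
  refine tendsto_tsum_of_dominated_convergence (bound := fun k => ‖thetaTerm z q k‖ * (C * C))
    ((summable_norm_thetaTerm hz hq0 hq).mul_right _) (fun k => ?_) (.of_forall fun n k => ?_)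
  · have hinv := tendsto_invQPochhammer hsq
    refine ((hinv.comp ?_).mul (hinv.comp ?_)).const_mul _
    · exact tendsto_atTop_add_const_right _ (-k) tendsto_natCast_atTop_atTop
    · exact tendsto_atTop_add_const_right _ k tendsto_natCast_atTop_atTop
  · have hC0 : 0 ≤ C := (norm_nonneg _).trans (hC 0)
    rw [finiteThetaTerm, norm_mul, norm_mul]
    gcongr
    exacts [hC _, hC _]

lemma multipliable_triple_product_factors (z : 𝕜) (hq : ‖q‖ < 1) :
    Multipliable fun n : ℕ => (1 + z * q ^ (2 * n + 1)) * (1 + z⁻¹ * q ^ (2 * n + 1)) := by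
  have hfactor (w : 𝕜) : Multipliable fun n : ℕ => 1 + w * q ^ (2 * n + 1) := by
    refine multipliable_one_add_of_summable ?_
    simp only [norm_mul, norm_pow]
    refine ((summable_geometric_of_lt_one (norm_nonneg q) hq).comp_injective
      (i := fun n : ℕ => 2 * n + 1) fun a b h => ?_).mul_left _
    simp only at h
    omega
  exact (hfactor z).mul (hfactor z⁻¹)

theorem jacobi_triple_product (hz : z ≠ 0) (hq : ‖q‖ < 1) :
    ∑' k, thetaTerm z q k =
      eulerFunction (q ^ 2) *
        ∏' n : ℕ, (1 + z * q ^ (2 * n + 1)) * (1 + z⁻¹ * q ^ (2 * n + 1)) := by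
  rcases eq_or_ne q 0 with rfl | hq0
  · rw [tsum_eq_single 0 fun k hk => ?_]
    · simp [thetaTerm, eulerFunction]
    · simp [thetaTerm, zero_zpow _ (pow_ne_zero 2 hk)]
  have hsq : ‖q ^ 2‖ < 1 := norm_pow_lt_one_of_ne_zero hq two_ne_zero
  have hne := eulerFunction_ne_zero hsq
  have hdouble : Tendsto (fun n : ℕ => 2 * n) atTop atTop :=
    tendsto_id.const_mul_atTop' two_pos
  have hprod := (multipliable_triple_product_factors z hq).tendsto_prod_tprod_nat.div
    ((tendsto_qPochhammer hsq).comp hdouble) hne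
  have hsum := (tendsto_tsum_finiteThetaTerm hz hq0 hq).congr fun n =>
    (hasSum_finiteThetaTerm hz hq0 (fun _ => pow_ne_one_of_norm_lt_one hq) n).tsum_eq
  have hlim := tendsto_nhds_unique hsum hprod
  rwa [← mul_assoc, mul_inv_eq_iff_eq_mul₀ hne, div_mul_cancel₀ _ hne, mul_inv_eq_iff_eq_mul₀ hne,
    mul_comm] at hlim

end Limit
end QSeries

section Dissection

lemma hasProd_prod_residues {M : Type*} [CommMonoid M] [TopologicalSpace M] [ContinuousMul M]
    [RegularSpace M] {f : ℕ → M} {a : M} (hf : HasProd f a) (N : ℕ) [NeZero N] :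
    HasProd (fun k => ∏ j : Fin N, f (k * N + j)) a :=
  ((Nat.divModEquiv N).symm.hasProd_iff.2 hf).prod_fiberwise fun _ => hasProd_fintype _

variable {𝕜 : Type*} [NormedField 𝕜] [CompleteSpace 𝕜] {x : 𝕜}

lemma eulerFunction_mul_eulerFunction_pow_six (hx0 : x ≠ 0) (hx : ‖x‖ < 1) :
    eulerFunction x * eulerFunction (x ^ 6) =
      eulerFunction (x ^ 2) * eulerFunction (x ^ 3) *
        ∏' n : ℕ,
          (1 + -x ^ 2 * (x ^ 3) ^ (2 * n + 1)) * (1 + (-x ^ 2)⁻¹ * (x ^ 3) ^ (2 * n + 1)) := by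
  have hpow {m : ℕ} (hm : m ≠ 0) : ‖x ^ m‖ < 1 := norm_pow_lt_one_of_ne_zero hx hm
  have heuler {y : 𝕜} (hy : ‖y‖ < 1) : HasProd (fun n : ℕ => 1 - y ^ (n + 1)) (eulerFunction y) :=
    (multipliable_eulerFunction hy).hasProd
  have hleft := (hasProd_prod_residues (heuler hx) 6).mul (heuler (hpow (m := 6) (by simp)))
  have hright := ((hasProd_prod_residues (heuler (hpow two_ne_zero)) 3).mul
    (hasProd_prod_residues (heuler (hpow three_ne_zero)) 2)).mul
    (multipliable_triple_product_factors (-x ^ 2) (hpow three_ne_zero)).hasProd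
  refine hleft.unique (hright.congr_fun fun k => ?_)
  have hinv : (-x ^ 2)⁻¹ * (x ^ 3) ^ (2 * k + 1) = -x ^ (6 * k + 1) := by
    field_simp
    ring
  simp only [hinv, Fin.prod_univ_six, Fin.prod_univ_three, Fin.prod_univ_two]
  simp only [Fin.isValue, Fin.coe_ofNat_eq_mod, Nat.zero_mod, add_zero, Nat.one_mod, Nat.reduceMod,
    Nat.mod_succ, neg_mul]
  ring

theorem eulerFunction_quotient_eq_tsum (hx0 : x ≠ 0) (hx : ‖x‖ < 1) :
    eulerFunction x * eulerFunction (x ^ 6) ^ 2 / (eulerFunction (x ^ 3) * eulerFunction (x ^ 2)) =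
      ∑' k, thetaTerm (-x ^ 2) (x ^ 3) k := by
  have hpow {m : ℕ} (hm : m ≠ 0) : ‖x ^ m‖ < 1 := norm_pow_lt_one_of_ne_zero hx hm
  rw [jacobi_triple_product (neg_ne_zero.2 (pow_ne_zero 2 hx0)) (hpow three_ne_zero),
    ← pow_mul, div_eq_iff (mul_ne_zero (eulerFunction_ne_zero (hpow three_ne_zero))
      (eulerFunction_ne_zero (hpow two_ne_zero)))]
  linear_combination eulerFunction (x ^ 6) * eulerFunction_mul_eulerFunction_pow_six hx0 hx

end Dissection

section Eta

lemma eta_natCast_mul (n : ℕ) (z : ℂ) :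
    eta (n * z) = Complex.exp (π * Complex.I * z / 12) ^ n *
      eulerFunction (Complex.exp (2 * π * Complex.I * z) ^ n) := by
  simp only [eta, eulerFunction, ← Complex.exp_nat_mul]
  congr 1
  · congr 1
    ring
  · refine tprod_congr fun k => ?_
    push_cast
    ring_nf

theorem eta_quotient_eq_tsum {z : ℂ} (hz : 0 < z.im) :
    eta z * eta (6 * z) ^ 2 / (eta (3 * z) * eta (2 * z)) =
      ∑' k : ℤ, (-1) ^ k * Complex.exp (2 * π * Complex.I * z * (3 * k + 1) ^ 2 / 3) := by
  set E := Complex.exp (π * Complex.I * z / 12) with hE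
  set x := Complex.exp (2 * π * Complex.I * z) with hxdef
  have hx : ‖x‖ < 1 := UpperHalfPlane.norm_exp_two_pi_I_lt_one ⟨z, hz⟩
  have hx0 : x ≠ 0 := Complex.exp_ne_zero _
  have hE0 : E ≠ 0 := Complex.exp_ne_zero _
  have h1 := eta_natCast_mul 1 z
  have h2 := eta_natCast_mul 2 z
  have h3 := eta_natCast_mul 3 z
  have h6 := eta_natCast_mul 6 z
  simp only [Nat.cast_one, one_mul, pow_one, Nat.cast_ofNat, ← hE, ← hxdef] at h1 h2 h3 h6
  calc eta z * eta (6 * z) ^ 2 / (eta (3 * z) * eta (2 * z))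
      = E ^ 8 * (eulerFunction x * eulerFunction (x ^ 6) ^ 2 /
          (eulerFunction (x ^ 3) * eulerFunction (x ^ 2))) := by
        rw [h1, h2, h3, h6]
        field_simp
    _ = ∑' k : ℤ, (-1) ^ k * Complex.exp (2 * π * Complex.I * z * (3 * k + 1) ^ 2 / 3) := by
        rw [eulerFunction_quotient_eq_tsum hx0 hx, ← tsum_mul_left]
        refine tsum_congr fun k => ?_
        have hexp : E ^ 8 * ((x ^ 2) ^ k * (x ^ 3) ^ (k ^ 2)) =
            Complex.exp (2 * π * Complex.I * z * (3 * k + 1) ^ 2 / 3) := by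
          simp only [hE, hxdef, ← Complex.exp_nat_mul, ← Complex.exp_int_mul, ← Complex.exp_add]
          congr 1
          push_cast
          ring
        rw [thetaTerm, neg_eq_neg_one_mul, mul_zpow, ← hexp]
        ring

end Eta

section Theta

open HurwitzZeta

/-- The Fourier weight that Poisson summation attaches to the shifts `1/12`, `5/12` and `1/4`, taken
with coefficients `1`, `1` and `-2`. -/
noncomputable def cosWeight (n : ℤ) : ℝ :=
  Real.cos (2 * π * (1 / 12) * n) + Real.cos (2 * π * (5 / 12) * n) -
    2 * Real.cos (2 * π * (1 / 4) * n)

lemma cosWeight_eq_mul (n : ℤ) :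
    cosWeight n = 2 * Real.cos (n * π / 2) * (Real.cos (n * π / 3) - 1) := by
  have hadd := Real.cos_add_cos (2 * π * (5 / 12) * n) (2 * π * (1 / 12) * n)
  rw [show (2 * π * (5 / 12) * n + 2 * π * (1 / 12) * n) / 2 = n * π / 2 by ring,
    show (2 * π * (5 / 12) * n - 2 * π * (1 / 12) * n) / 2 = n * π / 3 by ring] at hadd
  rw [cosWeight, add_comm (Real.cos _), hadd, show 2 * π * (1 / 4) * n = n * π / 2 by ring]
  ring

lemma cosWeight_mul_six_add (k j : ℤ) : cosWeight (k * 6 + j) = (-1) ^ k * cosWeight j := by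
  have hhalf : ((k * 6 + j : ℤ) : ℝ) * π / 2 = j * π / 2 + k * π + k * (2 * π) := by
    push_cast
    ring
  have hthird : ((k * 6 + j : ℤ) : ℝ) * π / 3 = j * π / 3 + k * (2 * π) := by
    push_cast
    ring
  rw [cosWeight_eq_mul, cosWeight_eq_mul, hhalf, hthird, Real.cos_add_int_mul_two_pi,
    Real.cos_add_int_mul_two_pi, Real.cos_add_int_mul_pi]
  ring

lemma cosWeight_eq_zero_of_odd {n : ℤ} (hn : Odd n) : cosWeight n = 0 := by
  obtain ⟨m, rfl⟩ := hn
  have hcos : Real.cos (((2 * m + 1 : ℤ) : ℝ) * π / 2) = 0 :=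
    Real.cos_eq_zero_iff.2 ⟨m, by push_cast; ring⟩
  rw [cosWeight_eq_mul, hcos, mul_zero, zero_mul]

lemma cosWeight_zero : cosWeight 0 = 0 := by
  simp [cosWeight_eq_mul]

lemma cosWeight_two : cosWeight 2 = 3 := by
  rw [cosWeight_eq_mul, show ((2 : ℤ) : ℝ) * π / 2 = π by push_cast; ring,
    show ((2 : ℤ) : ℝ) * π / 3 = π - π / 3 by push_cast; ring, Real.cos_pi_sub, Real.cos_pi,
    Real.cos_pi_div_three]
  norm_num

lemma cosWeight_neg (n : ℤ) : cosWeight (-n) = cosWeight n := by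
  simp [cosWeight]

lemma cosWeight_four : cosWeight 4 = -3 := by
  rw [show (4 : ℤ) = 1 * 6 + -2 by norm_num, cosWeight_mul_six_add, cosWeight_neg, cosWeight_two]
  norm_num

lemma sum_residues_cosWeight_mul (f : ℤ → ℝ) (k : ℤ) :
    ∑ j : Fin 6, cosWeight (k * 6 + (j : ℕ)) * f (k * 6 + (j : ℕ)) =
      3 * (-1) ^ k * (f (k * 6 + 2) - f (k * 6 + 4)) := by
  have hthree : cosWeight 3 = 0 := cosWeight_eq_zero_of_odd (by decide)
  have hfive : cosWeight 5 = 0 := cosWeight_eq_zero_of_odd (by decide)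
  simp only [cosWeight_mul_six_add, Fin.sum_univ_six]
  simp only [Fin.isValue, Fin.coe_ofNat_eq_mod, Nat.reduceMod, Nat.zero_mod, Nat.one_mod,
    Nat.mod_succ, Nat.cast_zero, Nat.cast_one, Nat.cast_ofNat, cosWeight_zero,
    cosWeight_eq_zero_of_odd odd_one, cosWeight_two, hthree, cosWeight_four, hfive]
  ring

lemma tsum_cosWeight_mul {f : ℤ → ℝ} (heven : Function.Even f)
    (hf : Summable fun n => cosWeight n * f n) :
    ∑' n, cosWeight n * f n = 6 * ∑' k : ℤ, (-1) ^ k * f (k * 6 + 2) := by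
  set g : ℤ → ℝ := fun k => (-1) ^ k * f (k * 6 + 2) with hg
  have hgsum : Summable g := by
    have hinj : Function.Injective fun k : ℤ => k * 6 + 2 := fun a b h => by simpa using h
    refine ((hf.comp_injective hinj).div_const 3).congr fun k => ?_
    rw [Function.comp_apply, cosWeight_mul_six_add, cosWeight_two]
    ring
  have hreflect (k : ℤ) : g (-k - 1) = -((-1) ^ k * f (k * 6 + 4)) := by
    have hsign : (-1 : ℝ) ^ (-k - 1) = -(-1) ^ k := by
      rw [zpow_sub_one₀ (by norm_num), zpow_neg, ← inv_zpow, inv_neg_one, mul_neg_one]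
    simp only [hg]
    rw [hsign, show (-k - 1) * 6 + 2 = -(k * 6 + 4) by ring, heven, neg_mul]
  have hblock (k : ℤ) : ∑ j : Fin 6, cosWeight (k * 6 + (j : ℕ)) * f (k * 6 + (j : ℕ)) =
      3 * (g k + g (-k - 1)) := by
    rw [sum_residues_cosWeight_mul, hreflect]
    ring
  have hneg : HasSum (fun k => g (-k - 1)) (∑' k, g k) :=
    ((Equiv.neg ℤ).trans (Equiv.subRight 1)).hasSum_iff.2 hgsum.hasSum
  have hblocks := ((Int.divModEquiv 6).symm.hasSum_iff.2 hf.hasSum).prod_fiberwise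
    fun _ => hasSum_fintype _
  have hfold := ((hgsum.hasSum.add hneg).mul_left 3).congr_fun hblock
  rw [hblocks.unique hfold]
  ring

lemma hasSum_cos_mul_exp_cosKernel (a : ℝ) {t : ℝ} (ht : 0 < t) :
    HasSum (fun n : ℤ => Real.cos (2 * π * a * n) * Real.exp (-π * n ^ 2 * t)) (cosKernel a t) := by
  refine (Complex.hasSum_re (hasSum_int_cosKernel a ht)).congr_fun fun n => ?_
  have hexp : 2 * π * Complex.I * a * n = ((2 * π * a * n : ℝ) : ℂ) * Complex.I := by
    push_cast
    ring
  rw [Complex.re_mul_ofReal, hexp, Complex.exp_ofReal_mul_I_re]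

lemma cosKernel_add_sub_eq_tsum {t : ℝ} (ht : 0 < t) :
    cosKernel ((1 / 12 : ℝ) : UnitAddCircle) t + cosKernel ((5 / 12 : ℝ) : UnitAddCircle) t -
        2 * cosKernel ((1 / 4 : ℝ) : UnitAddCircle) t =
      6 * ∑' k : ℤ, (-1) ^ k * Real.exp (-π * (k * 6 + 2) ^ 2 * t) := by
  have hsum : HasSum (fun n : ℤ => cosWeight n * Real.exp (-π * n ^ 2 * t)) _ :=
    (((hasSum_cos_mul_exp_cosKernel (1 / 12) ht).add
      (hasSum_cos_mul_exp_cosKernel (5 / 12) ht)).sub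
      ((hasSum_cos_mul_exp_cosKernel (1 / 4) ht).mul_left 2)).congr_fun fun n => by
        rw [cosWeight]
        ring
  have heven : Function.Even fun n : ℤ => Real.exp (-π * n ^ 2 * t) := fun n => by
    simp only [Int.cast_neg, even_two, Even.neg_pow]
  rw [← hsum.tsum_eq, tsum_cosWeight_mul heven hsum.summable]
  push_cast
  rfl

lemma exp_rpow_mul_tsum_eq_evenKernel {τ : ℝ} (hτ : 0 < τ) :
    Real.exp (-π / τ) ^ ((1 : ℝ) / 24) *
        ∑' k : ℤ, (Real.exp (-π / τ) ^ (6 * (k : ℝ) ^ 2 + (k : ℝ)) +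
          Real.exp (-π / τ) ^ (6 * (k : ℝ) ^ 2 + 5 * (k : ℝ) + 1) -
          2 * Real.exp (-π / τ) ^ (6 * (k : ℝ) ^ 2 + 3 * (k : ℝ) + 1 / 3)) =
      evenKernel ((1 / 12 : ℝ) : UnitAddCircle) (6 / τ) +
        evenKernel ((5 / 12 : ℝ) : UnitAddCircle) (6 / τ) -
        2 * evenKernel ((1 / 4 : ℝ) : UnitAddCircle) (6 / τ) := by
  have ht : 0 < 6 / τ := by positivity
  rw [← tsum_mul_left]
  refine HasSum.tsum_eq ((((hasSum_int_evenKernel (1 / 12) ht).add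
    (hasSum_int_evenKernel (5 / 12) ht)).sub
    ((hasSum_int_evenKernel (1 / 4) ht).mul_left 2)).congr_fun fun k => ?_)
  simp only [← Real.exp_mul, mul_sub, mul_add, mul_left_comm _ (2 : ℝ), ← Real.exp_add]
  congr! 3 <;> field_simp <;> ring

lemma one_div_sqrt_mul_rpow_mul_tsum_eq {τ : ℝ} (hτ : 0 < τ) :
    1 / √(2 * τ) * Real.exp (-π / τ) ^ ((1 : ℝ) / 24) *
        ∑' k : ℤ, (Real.exp (-π / τ) ^ (6 * (k : ℝ) ^ 2 + (k : ℝ)) +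
          Real.exp (-π / τ) ^ (6 * (k : ℝ) ^ 2 + 5 * (k : ℝ) + 1) -
          2 * Real.exp (-π / τ) ^ (6 * (k : ℝ) ^ 2 + 3 * (k : ℝ) + 1 / 3)) =
      √3 * ∑' k : ℤ, (-1) ^ k * Real.exp (-(2 * π * τ * (3 * k + 1) ^ 2 / 3)) := by
  have hconst : 1 / √(2 * τ) * (1 / √(6 / τ)) * 6 = √3 := by
    rw [one_div_mul_one_div, ← Real.sqrt_mul (by positivity),
      show 2 * τ * (6 / τ) = 2 ^ 2 * 3 by field_simp; norm_num, Real.sqrt_mul (by positivity),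
      Real.sqrt_sq two_pos.le]
    field_simp
    norm_num
  rw [mul_assoc, exp_rpow_mul_tsum_eq_evenKernel hτ]
  simp only [evenKernel_functional_equation, ← Real.sqrt_eq_rpow, one_div_div]
  rw [mul_left_comm 2, ← mul_add, ← mul_sub, cosKernel_add_sub_eq_tsum (by positivity), ← mul_assoc,
    ← mul_assoc, hconst]
  congr! 5 with k
  ring_nf

end Theta

theorem two_arm_eta_identity (τ : ℝ) (hτ : 0 < τ) :
    (Real.sqrt 3 : ℂ) * (eta (τ * Complex.I) * eta (6 * τ * Complex.I) ^ 2) /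
        (eta (3 * τ * Complex.I) * eta (2 * τ * Complex.I)) =
      ((1 / Real.sqrt (2 * τ) : ℝ) : ℂ) *
        ((Real.exp (-Real.pi / τ) ^ ((1 : ℝ) / 24) : ℝ) : ℂ) *
        ∑' k : ℤ, ((Real.exp (-Real.pi / τ) ^ (6 * (k : ℝ) ^ 2 + (k : ℝ)) +
            Real.exp (-Real.pi / τ) ^ (6 * (k : ℝ) ^ 2 + 5 * (k : ℝ) + 1) -
            2 * Real.exp (-Real.pi / τ) ^ (6 * (k : ℝ) ^ 2 + 3 * (k : ℝ) + 1 / 3) : ℝ) : ℂ) := by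
  have him : 0 < (τ * Complex.I).im := by simpa using hτ
  rw [← Complex.ofReal_tsum, ← Complex.ofReal_mul, ← Complex.ofReal_mul,
    one_div_sqrt_mul_rpow_mul_tsum_eq hτ, mul_div_assoc, mul_assoc 6, mul_assoc 3, mul_assoc 2,
    eta_quotient_eq_tsum him, Complex.ofReal_mul, Complex.ofReal_tsum]
  congr 1
  refine tsum_congr fun k => ?_
  have hexp : 2 * π * Complex.I * (τ * Complex.I) * (3 * k + 1) ^ 2 / 3 =
      ((-(2 * π * τ * (3 * k + 1) ^ 2 / 3) : ℝ) : ℂ) := by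
    push_cast
    linear_combination (2 * π * τ * (3 * k + 1) ^ 2 / 3 : ℂ) * Complex.I_mul_I
  rw [hexp]
  push_cast
  rfl
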